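/- Let n ≥ 1, let ι : Λ_n → Λ̃ be a primitive isometric embedding of the generalized Kummer lattice into the Mukai lattice, let v be a generator of the rank-1 orthogonal complement ι(Λ_n)^⊥, and let α ∈ Λ_n be primitive isotropic with d = Div(α). Then the lattice H(α,ι), the saturation of the subgroup of Λ̃ generated by ι(α) and v equipped with the restriction of the Mukai form, is isometric to L_{n,d}; moreover there is such an isometry H(α,ι) → L_{n,d} sending v to (d,b) for some integer b with gcd(d,b) = 1. -/

import Mathlib

/-- The Beauville–Bogomolov form of the generalized Kummer lattice
`Λ_n = U^{⊕3} ⊕ ⟨-(2n+2)⟩`, as a bilinear form on `ℤ⁷`. -/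
def kummerForm (n : ℕ) (x y : Fin 7 → ℤ) : ℤ :=
  x 0 * y 1 + x 1 * y 0 + x 2 * y 3 + x 3 * y 2 + x 4 * y 5 + x 5 * y 4
    - (2 * (n : ℤ) + 2) * (x 6 * y 6)

/-- The Mukai form of the Mukai lattice `Λ̃ = U^{⊕4}`, as a bilinear form on `ℤ⁸`. -/
def mukaiForm (x y : Fin 8 → ℤ) : ℤ :=
  x 0 * y 1 + x 1 * y 0 + x 2 * y 3 + x 3 * y 2 + x 4 * y 5 + x 5 * y 4
    + x 6 * y 7 + x 7 * y 6

/-- An element of `ℤ^m` is primitive if the gcd of its coordinates is `1`. -/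
def IsPrimitive {m : ℕ} (x : Fin m → ℤ) : Prop :=
  Finset.univ.gcd x = 1

/-- `d` is the divisibility `Div(x)` of `x` with respect to the bilinear form `B`,
i.e. the positive generator of the ideal `{B x y : y}` of `ℤ`. -/
def IsDivisibility {m : ℕ} (B : (Fin m → ℤ) → (Fin m → ℤ) → ℤ)
    (x : Fin m → ℤ) (d : ℤ) : Prop :=
  0 < d ∧ (∀ y, d ∣ B x y) ∧ ∀ e : ℤ, (∀ y, e ∣ B x y) → e ∣ d

/-- `ι : Λ_n → Λ̃` is a primitive isometric embedding. -/
def IsPrimitiveIsometricEmbedding (n : ℕ)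
    (ι : (Fin 7 → ℤ) →ₗ[ℤ] (Fin 8 → ℤ)) : Prop :=
  Function.Injective ι ∧ (∀ x y, mukaiForm (ι x) (ι y) = kummerForm n x y) ∧
    ∀ (k : ℤ) (x : Fin 8 → ℤ), k ≠ 0 → k • x ∈ LinearMap.range ι →
      x ∈ LinearMap.range ι

/-- The saturation of the subgroup of `ℤ^m` generated by a set `s`:
all `x` with `k • x` in the span of `s` for some nonzero integer `k`. -/
def satSpan {m : ℕ} (s : Set (Fin m → ℤ)) : Submodule ℤ (Fin m → ℤ) where
  carrier := {x | ∃ k : ℤ, k ≠ 0 ∧ k • x ∈ Submodule.span ℤ s}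
  add_mem' := by
    rintro x y ⟨k, hk, hkx⟩ ⟨l, hl, hly⟩
    refine ⟨k * l, mul_ne_zero hk hl, ?_⟩
    have h : (k * l) • (x + y) = l • (k • x) + k • (l • y) := by
      rw [smul_add, mul_comm k l, mul_smul, mul_comm l k, mul_smul]
    rw [h]
    exact Submodule.add_mem _ (Submodule.smul_mem _ _ hkx)
      (Submodule.smul_mem _ _ hly)
  zero_mem' := ⟨1, one_ne_zero, by simp⟩
  smul_mem' := by
    rintro c x ⟨k, hk, hkx⟩
    exact ⟨k, hk, by rw [smul_comm]; exact Submodule.smul_mem _ c hkx⟩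

theorem mf_add_left (x y z : Fin 8 → ℤ) :
    mukaiForm (x + y) z = mukaiForm x z + mukaiForm y z := by
  simp only [mukaiForm, Pi.add_apply]; ring

theorem mf_sub_left (x y z : Fin 8 → ℤ) :
    mukaiForm (x - y) z = mukaiForm x z - mukaiForm y z := by
  simp only [mukaiForm, Pi.sub_apply]; ring

theorem mf_smul_left (k : ℤ) (x z : Fin 8 → ℤ) :
    mukaiForm (k • x) z = k * mukaiForm x z := by
  simp only [mukaiForm, Pi.smul_apply, smul_eq_mul]; ring

theorem mf_symm (x z : Fin 8 → ℤ) : mukaiForm x z = mukaiForm z x := by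
  simp only [mukaiForm]; ring

theorem mf_add_right (x y z : Fin 8 → ℤ) :
    mukaiForm z (x + y) = mukaiForm z x + mukaiForm z y := by
  simp only [mukaiForm, Pi.add_apply]; ring

theorem mf_sub_right (x y z : Fin 8 → ℤ) :
    mukaiForm z (x - y) = mukaiForm z x - mukaiForm z y := by
  simp only [mukaiForm, Pi.sub_apply]; ring

theorem mf_smul_right (k : ℤ) (x z : Fin 8 → ℤ) :
    mukaiForm z (k • x) = k * mukaiForm z x := by
  simp only [mukaiForm, Pi.smul_apply, smul_eq_mul]; ring

/-- The linear functional `y ↦ (x, y)` on the Mukai lattice. -/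
def mfLin (x : Fin 8 → ℤ) : (Fin 8 → ℤ) →ₗ[ℤ] ℤ where
  toFun := mukaiForm x
  map_add' a b := mf_add_right a b x
  map_smul' k a := mf_smul_right k a x

/-- The linear functional `y ↦ (x, y)` on the Kummer lattice. -/
def kfLin (n : ℕ) (x : Fin 7 → ℤ) : (Fin 7 → ℤ) →ₗ[ℤ] ℤ where
  toFun := kummerForm n x
  map_add' a b := by simp only [kummerForm, Pi.add_apply]; ring
  map_smul' k a := by
    simp only [kummerForm, Pi.smul_apply, smul_eq_mul, RingHom.id_apply]; ring

theorem functional_gen {M : Type*} [AddCommGroup M] [Module ℤ M] (φ : M →ₗ[ℤ] ℤ) :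
    ∃ z, ∀ y, φ z ∣ φ y := by
  obtain ⟨g, hg⟩ := (IsPrincipalIdealRing.principal (LinearMap.range φ : Ideal ℤ)).principal
  have h1 : g ∈ LinearMap.range φ := by rw [hg]; exact Submodule.mem_span_singleton_self g
  obtain ⟨z, hz⟩ := h1
  refine ⟨z, fun y => ?_⟩
  have h2 : φ y ∈ LinearMap.range φ := ⟨y, rfl⟩
  rw [hg, Submodule.mem_span_singleton] at h2
  obtain ⟨a, ha⟩ := h2
  exact ⟨a, by rw [hz, ← ha, smul_eq_mul, mul_comm]⟩

theorem exists_pair_one (x : Fin 8 → ℤ) (hx : ∀ (k : ℤ) (u : Fin 8 → ℤ), x = k • u → IsUnit k) :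
    ∃ z, mukaiForm x z = 1 := by
  obtain ⟨z, hz⟩ := functional_gen (mfLin x)
  replace hz : ∀ y, mukaiForm x z ∣ mukaiForm x y := hz
  have hc : ∀ i, mukaiForm x z ∣ x i := by
    intro i
    have h0 := hz (Pi.single 0 1)
    have h1 := hz (Pi.single 1 1)
    have h2 := hz (Pi.single 2 1)
    have h3 := hz (Pi.single 3 1)
    have h4 := hz (Pi.single 4 1)
    have h5 := hz (Pi.single 5 1)
    have h6 := hz (Pi.single 6 1)
    have h7 := hz (Pi.single 7 1)
    generalize mukaiForm x z = g at *
    simp [mukaiForm, Pi.single_apply] at h0 h1 h2 h3 h4 h5 h6 h7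
    fin_cases i <;> assumption
  choose u hu using hc
  have hun : IsUnit (mukaiForm x z) := hx _ u (by ext i; simpa using hu i)
  rcases Int.isUnit_iff.1 hun with h | h
  · exact ⟨z, h⟩
  · exact ⟨(-1 : ℤ) • z, by rw [mf_smul_right, h]; norm_num⟩

theorem proj_exists (n : ℕ) (ι : (Fin 7 → ℤ) →ₗ[ℤ] (Fin 8 → ℤ))
    (hiso : ∀ x y, mukaiForm (ι x) (ι y) = kummerForm n x y) (y : Fin 8 → ℤ) :
    ∃ p : Fin 7 → ℤ, ∀ β, mukaiForm (y - ι p) (ι β)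
      = β 6 * mukaiForm y (ι (Pi.single 6 1)) := by
  let φ : (Fin 7 → ℤ) →ₗ[ℤ] ℤ := (mfLin y).comp ι
  have hφ : ∀ β, mukaiForm y (ι β) = φ β := fun β => rfl
  have hs : ∀ β, φ β = ∑ i, β i * φ (Pi.single i 1) := by
    intro β
    rw [LinearMap.pi_apply_eq_sum_univ φ β]
    refine Finset.sum_congr rfl fun i _ => ?_
    rw [smul_eq_mul]
    congr 2
    ext j
    simp [Pi.single_apply, eq_comm]
  refine ⟨![φ (Pi.single 1 1), φ (Pi.single 0 1), φ (Pi.single 3 1), φ (Pi.single 2 1),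
    φ (Pi.single 5 1), φ (Pi.single 4 1), 0], fun β => ?_⟩
  rw [mf_sub_left, hiso, hφ, hφ, hs β]
  simp only [Fin.sum_univ_seven, kummerForm]
  simp
  ring

theorem key_data (n : ℕ) (ι : (Fin 7 → ℤ) →ₗ[ℤ] (Fin 8 → ℤ))
    (hι : IsPrimitiveIsometricEmbedding n ι) (v : Fin 8 → ℤ)
    (hv : ∀ x : Fin 8 → ℤ, (∀ y, mukaiForm x (ι y) = 0) ↔ ∃ k : ℤ, x = k • v) :
    ∃ (y : Fin 8 → ℤ) (k q : ℤ), (∀ β, mukaiForm y (ι β) = β 6) ∧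
      ι (Pi.single 6 1) + (2 * (n : ℤ) + 2) • y = k • v ∧
      mukaiForm v v = 2 * (n : ℤ) + 2 ∧ k ^ 2 = 1 + 2 * q * (2 * (n : ℤ) + 2) ∧
      mukaiForm y v = k ∧ mukaiForm y y = 2 * q := by
  obtain ⟨hinj, hiso, hsat⟩ := hι
  have hvo : ∀ β, mukaiForm v (ι β) = 0 := (hv v).2 ⟨1, by simp⟩
  have hvo' : ∀ β, mukaiForm (ι β) v = 0 := fun β => by rw [mf_symm, hvo]
  set N : ℤ := 2 * (n : ℤ) + 2 with hN
  have hNpos : 0 < N := by positivity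
  set w := ι (Pi.single 6 1) with hw
  have hwβ : ∀ β, mukaiForm w (ι β) = - N * β 6 := by
    intro β; rw [hw, hiso]; simp [kummerForm, hN]; ring
  have hww : mukaiForm w w = - N := by
    rw [hw, ← hw, hwβ]; simp
  -- w is primitive
  obtain ⟨y0, hy0⟩ : ∃ z, mukaiForm w z = 1 := by
    apply exists_pair_one
    intro k u hku
    have hk : k ≠ 0 := by
      rintro rfl
      have : w = 0 := by simpa using hku
      rw [this] at hww
      simp [mukaiForm] at hww
      omega
    obtain ⟨c, hc⟩ := hsat k u hk ⟨_, hku⟩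
    have h1 : ι (Pi.single 6 1) = ι (k • c) := by rw [map_smul, hc, ← hw, hku]
    have h2 := congrFun (hinj h1) 6
    simp at h2
    exact IsUnit.of_mul_eq_one _ h2.symm
  obtain ⟨p, hp⟩ := proj_exists n ι hiso y0
  obtain ⟨y, hy⟩ : ∃ y, y = y0 - ι p := ⟨_, rfl⟩
  have hyβ : ∀ β, mukaiForm y (ι β) = β 6 := by
    intro β; rw [hy, hp, mf_symm y0, ← hw, hy0, mul_one]
  have hyw : mukaiForm y w = 1 := by rw [hw, hyβ]; simp
  have hwy : mukaiForm w y = 1 := by rw [mf_symm, hyw]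
  obtain ⟨k, hk⟩ : ∃ k : ℤ, w + N • y = k • v := by
    rw [← hv]; intro β
    rw [mf_add_left, mf_smul_left, hwβ, hyβ]; ring
  obtain ⟨q, hq⟩ : ∃ q, mukaiForm y y = 2 * q :=
    ⟨y 0 * y 1 + y 2 * y 3 + y 4 * y 5 + y 6 * y 7, by simp only [mukaiForm]; ring⟩
  have hkyv : k * mukaiForm y v = 1 + 2 * q * N := by
    rw [← mf_smul_right, ← hk, mf_add_right, mf_smul_right, hyw, hq]; ring
  have hkv2 : k ^ 2 * mukaiForm v v = N * (1 + 2 * q * N) := by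
    have : mukaiForm (k • v) (k • v) = k ^ 2 * mukaiForm v v := by
      rw [mf_smul_left, mf_smul_right]; ring
    rw [← this, ← hk]
    simp only [mf_add_left, mf_add_right, mf_smul_left, mf_smul_right, hww, hwy, hyw, hq]; ring
  have hk0 : k ≠ 0 := by
    rintro rfl
    have : (-(2 * q)) * N = 1 := by linarith
    have h3 := Int.isUnit_iff.1 (IsUnit.of_mul_eq_one_right _ this)
    omega
  have hv0 : v ≠ 0 := by
    rintro rfl
    have h0 : mukaiForm y 0 = 0 := by simp [mukaiForm]
    rw [h0] at hkyv
    have : (-(2 * q)) * N = 1 := by linarith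
    have h3 := Int.isUnit_iff.1 (IsUnit.of_mul_eq_one_right _ this)
    omega
  obtain ⟨z0, hz0⟩ : ∃ z, mukaiForm v z = 1 := by
    apply exists_pair_one
    intro j u hju
    have hj : j ≠ 0 := by rintro rfl; exact hv0 (by simpa using hju)
    obtain ⟨l, hl⟩ := (hv u).1 (by
      intro β
      have := hvo β
      rw [hju, mf_smul_left] at this
      exact (mul_eq_zero.1 this).resolve_left hj)
    have h1 : (j * l - 1) • v = 0 := by
      rw [sub_smul, mul_smul, ← hl, ← hju, one_smul, sub_self]
    rcases smul_eq_zero.1 h1 with h | h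
    · exact IsUnit.of_mul_eq_one l (by linarith)
    · exact absurd h hv0
  obtain ⟨p', hp'⟩ := proj_exists n ι hiso z0
  obtain ⟨z, hz⟩ : ∃ z, z = z0 - ι p' := ⟨_, rfl⟩
  obtain ⟨m0, hm0⟩ : ∃ m0, m0 = mukaiForm z0 w := ⟨_, rfl⟩
  have hzβ : ∀ β, mukaiForm z (ι β) = β 6 * m0 := by intro β; rw [hz, hp', hm0]
  have hzv : mukaiForm z v = 1 := by
    rw [hz, mf_sub_left, hvo', mf_symm z0, hz0, sub_zero]
  obtain ⟨t, ht⟩ : ∃ t : ℤ, N • z + m0 • w = t • v := by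
    rw [← hv]; intro β
    rw [mf_add_left, mf_smul_left, mf_smul_left, hwβ, hzβ]; ring
  have htv : N = t * mukaiForm v v := by
    rw [← mf_smul_left, ← ht, mf_add_left, mf_smul_left, mf_smul_left, hzv, hw, hvo']; ring
  have hcop : IsCoprime N (k ^ 2) :=
    IsCoprime.pow_right ⟨-(2 * q), mukaiForm y v, by linarith⟩
  have hNv : N ∣ mukaiForm v v := hcop.dvd_of_dvd_mul_left ⟨_, hkv2⟩
  obtain ⟨s, hs⟩ := hNv
  have hts : t * s = 1 := by
    have : N * (t * s - 1) = 0 := by rw [hs] at htv; linarith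
    have := (mul_eq_zero.1 this).resolve_left hNpos.ne'
    linarith
  have hk2 : k ^ 2 * s = 1 + 2 * q * N := by
    have : N * (k ^ 2 * s - (1 + 2 * q * N)) = 0 := by rw [hs] at hkv2; linarith
    have := (mul_eq_zero.1 this).resolve_left hNpos.ne'
    linarith
  have hs1 : s = 1 := by
    rcases Int.isUnit_iff.1 (IsUnit.of_mul_eq_one_right _ hts) with h | h
    · exact h
    · exfalso
      rw [h] at hk2
      have h4 : k ^ 2 = -1 - 4 * (q * (n + 1)) := by rw [hN] at hk2; linarith
      rcases Int.even_or_odd' k with ⟨j, hj | hj⟩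
      · have : (2 * j) ^ 2 = 4 * j ^ 2 := by ring
        rw [hj, this] at h4; omega
      · have : (2 * j + 1) ^ 2 = 4 * (j ^ 2 + j) + 1 := by ring
        rw [hj, this] at h4; omega
  rw [hs1, mul_one] at hs hk2
  refine ⟨y, k, q, hyβ, hk, hs, hk2, ?_, hq⟩
  apply mul_left_cancel₀ hk0
  rw [hkyv, ← hk2]; ring

theorem arith_data (n : ℕ) (α : Fin 7 → ℤ) (hprim : IsPrimitive α)
    (hiso : kummerForm n α α = 0)
    (d : ℤ) (hd : IsDivisibility (kummerForm n) α d) :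
    IsCoprime d (α 6) ∧ d ∣ 2 * (n : ℤ) + 2 ∧ d ^ 2 ∣ (n : ℤ) + 1 ∧
      (∃ γ : Fin 7 → ℤ, α = d • γ + α 6 • Pi.single 6 1 ∧ γ 6 = 0) ∧
      ∃ ξ, kummerForm n α ξ = d := by
  obtain ⟨hd0, hdv, hdm⟩ := hd
  have h0 := hdv (Pi.single 1 1)
  have h1 := hdv (Pi.single 0 1)
  have h2 := hdv (Pi.single 3 1)
  have h3 := hdv (Pi.single 2 1)
  have h4 := hdv (Pi.single 5 1)
  have h5 := hdv (Pi.single 4 1)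
  have h6 := hdv (Pi.single 6 1)
  simp [kummerForm, Pi.single_apply] at h0 h1 h2 h3 h4 h5 h6
  have hcop : IsCoprime d (α 6) := by
    rw [Int.isCoprime_iff_gcd_eq_one]
    have ha : ((Int.gcd d (α 6) : ℕ) : ℤ) ∣ d := Int.gcd_dvd_left _ _
    have hb : ((Int.gcd d (α 6) : ℕ) : ℤ) ∣ α 6 := Int.gcd_dvd_right _ _
    have hg : ((Int.gcd d (α 6) : ℕ) : ℤ) ∣ Finset.univ.gcd α := by
      apply Finset.dvd_gcd
      intro i _
      fin_cases i
      exacts [ha.trans h0, ha.trans h1, ha.trans h2, ha.trans h3, ha.trans h4, ha.trans h5, hb]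
    have hp : Finset.univ.gcd α = 1 := hprim
    rw [hp] at hg
    have := Int.eq_one_of_dvd_one (by positivity) hg
    exact_mod_cast this
  obtain ⟨c0, h0⟩ := h0
  obtain ⟨c1, h1⟩ := h1
  obtain ⟨c2, h2⟩ := h2
  obtain ⟨c3, h3⟩ := h3
  obtain ⟨c4, h4⟩ := h4
  obtain ⟨c5, h5⟩ := h5
  refine ⟨hcop, hcop.dvd_of_dvd_mul_right h6, ?_, ⟨![c0, c1, c2, c3, c4, c5, 0], ?_, ?_⟩, ?_⟩
  · have : d ^ 2 ∣ ((n : ℤ) + 1) * (α 6) ^ 2 := by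
      refine ⟨c0 * c1 + c2 * c3 + c4 * c5, ?_⟩
      simp only [kummerForm, h0, h1, h2, h3, h4, h5] at hiso
      linarith
    exact (IsCoprime.pow hcop).dvd_of_dvd_mul_right this
  · ext i
    fin_cases i <;> simp [h0, h1, h2, h3, h4, h5]
  · simp
  · obtain ⟨z, hz⟩ := functional_gen (kfLin n α)
    replace hz : ∀ y, kummerForm n α z ∣ kummerForm n α y := hz
    obtain ⟨a, ha⟩ := hdm _ hz
    refine ⟨a • z, ?_⟩
    rw [ha, mul_comm]
    exact (kfLin n α).map_smul a z

/-- The lattice `H(α,ι)` (saturation of `⟨ι(α), v⟩` with the restricted Mukai form)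
is isometric to `L_{n,d}` (with Gram matrix `((2n+2)/d²)·[[1,0],[0,0]]`) by an
isometry sending `v` to `(d,b)` with `gcd(d,b) = 1`. -/
theorem stmt3 (n : ℕ) (hn : 1 ≤ n) (ι : (Fin 7 → ℤ) →ₗ[ℤ] (Fin 8 → ℤ))
    (hι : IsPrimitiveIsometricEmbedding n ι) (v : Fin 8 → ℤ)
    (hv : ∀ x : Fin 8 → ℤ, (∀ y, mukaiForm x (ι y) = 0) ↔ ∃ k : ℤ, x = k • v)
    (α : Fin 7 → ℤ) (hprim : IsPrimitive α) (hiso : kummerForm n α α = 0)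
    (d : ℤ) (hd : IsDivisibility (kummerForm n) α d) :
    d ^ 2 ∣ (n : ℤ) + 1 ∧
      ∃ (c b : ℤ), c * d ^ 2 = 2 * ((n : ℤ) + 1) ∧ IsCoprime d b ∧
        ∃ (hvH : v ∈ satSpan {ι α, v})
          (e : satSpan {ι α, v} ≃ₗ[ℤ] (Fin 2 → ℤ)),
          (∀ x y : satSpan {ι α, v}, c * (e x 0 * e y 0) = mukaiForm x.1 y.1) ∧
          e ⟨v, hvH⟩ = ![d, b] := by
  obtain ⟨y, k, q, hyβ, hk, hvv, hk2, hyv, hyy⟩ := key_data n ι hι v hv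
  obtain ⟨hcop, hdN, hd2, ⟨γ, hγ, hγ6⟩, ξ, hξ⟩ := arith_data n α hprim hiso d hd
  have hd0 : d ≠ 0 := hd.1.ne'
  obtain ⟨hinj, hisom, hsat⟩ := hι
  have hvo : ∀ β, mukaiForm v (ι β) = 0 := (hv v).2 ⟨1, by simp⟩
  have hvo' : ∀ β, mukaiForm (ι β) v = 0 := fun β => by rw [mf_symm, hvo]
  refine ⟨hd2, ?_⟩
  obtain ⟨c0, hc0⟩ := hd2
  obtain ⟨N', hN'⟩ := hdN
  -- coprimality of `d` and `α 6 * k`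
  have hdk : IsCoprime d k :=
    ⟨-(2 * q * N'), k, by linear_combination hk2 + 2 * q * hN'⟩
  obtain ⟨t, r, htr⟩ := hcop.mul_right hdk
  -- the generator g
  obtain ⟨h, hh⟩ : ∃ h, h = ι γ - (α 6 * N') • y := ⟨_, rfl⟩
  have hdh : d • h = ι α - (α 6 * k) • v := by
    have e1 : ι α = d • ι γ + α 6 • ι (Pi.single 6 1) := by
      conv_lhs => rw [hγ]
      rw [map_add, map_smul, map_smul]
    have e2 : ι (Pi.single 6 1) = k • v - (d * N') • y := by rw [← hk, hN']; simp
    rw [e1, e2, hh]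
    module
  obtain ⟨g, hg⟩ : ∃ g, g = t • v - r • h := ⟨_, rfl⟩
  have hdg : d • g = v - r • ι α := by
    have : d • g = (t * d) • v - r • (d • h) := by rw [hg]; module
    rw [this, hdh]
    have e3 : v = (t * d + r * (α 6 * k)) • v := by rw [htr, one_smul]
    conv_rhs => rw [e3]
    module
  have hαα : mukaiForm (ι α) (ι α) = 0 := by rw [hisom, hiso]
  have hgg : mukaiForm g g = 2 * c0 := by
    have e4 : mukaiForm (d • g) (d • g) = 2 * (n : ℤ) + 2 := by
      rw [hdg]
      simp only [mf_sub_left, mf_sub_right, mf_smul_left, mf_smul_right, hvo, hvo', hαα, hvv]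
      ring
    rw [mf_smul_left, mf_smul_right] at e4
    apply mul_left_cancel₀ (pow_ne_zero 2 hd0)
    linear_combination e4 + 2 * hc0
  have hgα : mukaiForm g (ι α) = 0 := by
    have e5 : mukaiForm (d • g) (ι α) = 0 := by
      rw [hdg, mf_sub_left, mf_smul_left, hvo, hαα]; ring
    rw [mf_smul_left] at e5
    exact (mul_eq_zero.1 e5).resolve_left hd0
  -- dual functionals
  obtain ⟨f, hf⟩ : ∃ f, f = k • y - (2 * q) • v := ⟨_, rfl⟩
  have hfv : mukaiForm v f = 1 := by
    rw [hf, mf_sub_right, mf_smul_right, mf_smul_right, mf_symm v y, hyv, hvv]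
    linear_combination hk2
  have hfα : mukaiForm (ι α) f = k * α 6 := by
    rw [hf, mf_sub_right, mf_smul_right, mf_smul_right, mf_symm (ι α) y, hyβ, hvo']
    ring
  have hαξ : mukaiForm (ι α) (ι ξ) = d := by rw [hisom, hξ]
  let F : (Fin 8 → ℤ) →ₗ[ℤ] (Fin 2 → ℤ) :=
    { toFun := fun x => ![d * mukaiForm x f - α 6 * k * mukaiForm x (ι ξ),
        t * mukaiForm x (ι ξ) + r * mukaiForm x f]
      map_add' := by
        intro a b
        ext i
        fin_cases i <;> simp [mf_add_left] <;> ring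
      map_smul' := by
        intro a b
        ext i
        simp only [mf_smul_left]
        fin_cases i <;> simp <;> ring }
  let G : (Fin 2 → ℤ) →ₗ[ℤ] (Fin 8 → ℤ) :=
    { toFun := fun u => u 0 • g + u 1 • ι α
      map_add' := by intro a b; simp only [Pi.add_apply]; module
      map_smul' := by
        intro a b; simp only [Pi.smul_apply, smul_eq_mul, RingHom.id_apply]; module }
  have hFv : F v = ![d, r] := by
    ext i
    fin_cases i <;> simp [F, hfv, hvo]
  have hFα : F (ι α) = ![0, 1] := by
    ext i
    fin_cases i
    · simp [F, hfα, hαξ]; ring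
    · simp [F, hfα, hαξ]; linear_combination htr
  have hFg : F g = ![1, 0] := by
    have e6 : d • F g = d • ![1, 0] := by
      rw [← map_smul, hdg, map_sub, map_smul, hFv, hFα]
      ext i
      fin_cases i <;> simp
    exact smul_right_injective _ hd0 e6
  have hGv : G ![d, r] = v := by
    have : G ![d, r] = d • g + r • ι α := rfl
    rw [this, hdg]; module
  have hGα : G ![0, 1] = ι α := by
    have : G ![0, 1] = (0 : ℤ) • g + (1 : ℤ) • ι α := rfl
    rw [this]; module
  have hFG : ∀ u, F (G u) = u := by
    intro u
    have : G u = u 0 • g + u 1 • ι α := rfl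
    rw [this, map_add, map_smul, map_smul, hFg, hFα]
    ext i
    fin_cases i <;> simp
  have hGmem : ∀ u, G u ∈ satSpan {ι α, v} := by
    intro u
    refine ⟨d, hd0, ?_⟩
    have : d • G u = (d * u 1 - u 0 * r) • ι α + u 0 • v := by
      have e7 : d • G u = u 0 • (d • g) + (d * u 1) • ι α := by
        have : G u = u 0 • g + u 1 • ι α := rfl
        rw [this]; module
      rw [e7, hdg]; module
    rw [this]
    exact Submodule.mem_span_pair.2 ⟨_, _, rfl⟩
  have hGF : ∀ x ∈ satSpan {ι α, v}, G (F x) = x := by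
    rintro x ⟨l, hl, hx⟩
    obtain ⟨a, b, hab⟩ := Submodule.mem_span_pair.1 hx
    have e8 : l • G (F x) = l • x := by
      rw [← map_smul, ← map_smul, ← hab, map_add, map_smul, map_smul, hFv, hFα, map_add,
        map_smul, map_smul, hGv, hGα]
    exact smul_right_injective _ hl e8
  have hvH : v ∈ satSpan {ι α, v} :=
    ⟨1, one_ne_zero, by rw [one_smul]; exact Submodule.subset_span (by simp)⟩
  let e : satSpan {ι α, v} ≃ₗ[ℤ] (Fin 2 → ℤ) :=
    LinearEquiv.ofLinearMap (F.comp (satSpan {ι α, v}).subtype)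
      (G.codRestrict _ hGmem)
      (by apply LinearMap.ext; intro u; exact hFG u)
      (by apply LinearMap.ext; intro x; apply Subtype.ext; exact hGF x.1 x.2)
  refine ⟨2 * c0, r, by linear_combination -2 * hc0,
    ⟨t, α 6 * k, by linear_combination htr⟩, hvH, e, ?_, hFv⟩
  intro x x'
  have ex : mukaiForm x.1 x'.1 = mukaiForm (G (F x.1)) (G (F x'.1)) := by
    rw [hGF _ x.2, hGF _ x'.2]
  rw [ex]
  change 2 * c0 * (F x.1 0 * F x'.1 0) =
    mukaiForm (F x.1 0 • g + F x.1 1 • ι α) (F x'.1 0 • g + F x'.1 1 • ι α)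
  simp only [mf_add_left, mf_add_right, mf_smul_left, mf_smul_right, hgg, hgα, hαα,
    mf_symm (ι α) g]
  ring
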